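/- arXiv:2507.07853 — 4 statements merged into one kernel-verified Lean document; each statement's English description precedes it below -/
import Mathlib

section
/- Let C be a lower-triangular d×d real matrix with ξ_l ≤ ‖C‖_F ≤ ξ_u and CCᵀ ≽ λ_min·I, where 0 < ξ_l ≤ ξ_u < ∞ and 0 < λ_min ≤ 1. Then the matrix L·N·Lᵀ is invertible, and the block-diagonal symmetric matrix F⁻¹ on ℝ^d ⊕ ℝ^p whose first block is CCᵀ and whose second block is F_C⁻¹ := (1/2)·L(I_d ⊗ C)Lᵀ·(L N Lᵀ)⁻¹·L(I_d ⊗ Cᵀ)Lᵀ satisfies λ_min^g · I ≼ F⁻¹ ≼ λ_max^g · I, where λ_min^g = min{λ_min, λ_min²/2} and λ_max^g = ξ_u². -/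
open Matrix

noncomputable section

/-- Frobenius norm of a square real matrix. -/
def frob {d : ℕ} (A : Matrix (Fin d) (Fin d) ℝ) : ℝ :=
  Real.sqrt (∑ i, ∑ j, (A i j) ^ 2)

/-- Index set for `ℝ^p`, `p = d(d+1)/2`: pairs `(i,j)` with `j ≤ i`. -/
abbrev LowIdx (d : ℕ) := {p : Fin d × Fin d // p.2 ≤ p.1}

/-- The commutation matrix `K`, with `K_{(i,j),(k,l)} = 1` iff `(k,l) = (j,i)`. -/
def commK (d : ℕ) : Matrix (Fin d × Fin d) (Fin d × Fin d) ℝ :=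
  fun p q => if q = (p.2, p.1) then 1 else 0

/-- The elimination matrix `L`, with `L_{(i,j),(k,l)} = 1` iff `(k,l) = (i,j)`. -/
def elimL (d : ℕ) : Matrix (LowIdx d) (Fin d × Fin d) ℝ :=
  fun q p => if p = q.1 then 1 else 0

/-- `N = (K + I)/2`. -/
def matN (d : ℕ) : Matrix (Fin d × Fin d) (Fin d × Fin d) ℝ := (2 : ℝ)⁻¹ • (commK d + 1)

/-- Kronecker product `I_d ⊗ C`: `(I_d ⊗ C)_{(i,j),(k,l)} = C_{ik}` if `j = l`, else `0`,
so that `(I_d ⊗ C)·vec(A) = vec(CA)`. -/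
def kronIC {d : ℕ} (C : Matrix (Fin d) (Fin d) ℝ) :
    Matrix (Fin d × Fin d) (Fin d × Fin d) ℝ :=
  fun p q => if p.2 = q.2 then C p.1 q.1 else 0

/-!
The compression `A = L (I ⊗ C) Lᵀ` is the matrix of `vech X ↦ vech (C X)` on lower triangular
matrices, which left multiplication by the lower triangular `C` preserves; hence `Aᵀ A` is the
compression of `I ⊗ Cᵀ C` and inherits the scalar Loewner bounds of `Cᵀ C`. For a square matrix
`M`, the products `M Mᵀ` and `Mᵀ M` have the same spectrum, so these bounds pass from `C Cᵀ` to
`Cᵀ C` and from `Aᵀ A` to `A Aᵀ`. Finally `L N Lᵀ` is diagonal with entries `1` and `1/2`, so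
`F_C⁻¹ = A (L N Lᵀ)⁻¹ Aᵀ / 2` lies between `A Aᵀ / 2` and `A Aᵀ`; the upper bound on `C Cᵀ` is
its trace `‖C‖_F²`.
-/

section Loewner

variable {n 𝕜 : Type*} [RCLike 𝕜]

lemma spectrum_matrix_mul_comm {R S : Type*} [CommSemiring R] [CommRing S] [Algebra R S]
    [Fintype n] [DecidableEq n] (A B : Matrix n n S) :
    spectrum R (A * B) = spectrum R (B * A) := by
  ext r
  simp only [spectrum.mem_iff, isUnit_iff_isUnit_det, algebraMap_eq_diagonal, Pi.algebraMap_def,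
    ← scalar_apply, ← eval_charpoly, charpoly_mul_comm A B]

lemma posSemidef_fromBlocks_diagonal {m R : Type*} [Ring R] [PartialOrder R] [StarRing R]
    [AddLeftMono R] [Finite m] [Finite n] {A : Matrix m m R} {D : Matrix n n R}
    (hA : A.PosSemidef) (hD : D.PosSemidef) : (fromBlocks A 0 0 D).PosSemidef := by
  cases nonempty_fintype m
  cases nonempty_fintype n
  refine .of_dotProduct_mulVec_nonneg (hA.1.fromBlocks (by simp) hD.1) fun x ↦ ?_
  obtain ⟨u, v, rfl⟩ : ∃ u v, x = Sum.elim u v := ⟨_, _, (Sum.elim_comp_inl_inr x).symm⟩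
  simpa [fromBlocks_mulVec, Function.star_sumElim, sumElim_dotProduct_sumElim] using
    add_nonneg (hA.dotProduct_mulVec_nonneg u) (hD.dotProduct_mulVec_nonneg v)

lemma fromBlocks_diagonal_smul_one {m R : Type*} [DecidableEq m] [DecidableEq n] [Semiring R]
    (c : R) : fromBlocks (c • (1 : Matrix m m R)) 0 0 (c • (1 : Matrix n n R)) = c • 1 := by
  rw [← fromBlocks_one, fromBlocks_smul, smul_zero, smul_zero]

open scoped ComplexOrder MatrixOrder

lemma fromBlocks_diagonal_mono {m : Type*} [Finite m] [Finite n] {A B : Matrix m m 𝕜}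
    {D E : Matrix n n 𝕜} (hAB : A ≤ B) (hDE : D ≤ E) :
    fromBlocks A 0 0 D ≤ fromBlocks B 0 0 E := by
  rw [le_iff] at *
  simpa [sub_eq_add_neg, fromBlocks_neg, fromBlocks_add] using
    posSemidef_fromBlocks_diagonal hAB hDE

variable [DecidableEq n]

lemma diagonal_le_diagonal {v w : n → 𝕜} (h : v ≤ w) :
    diagonal v ≤ diagonal w := by
  rw [le_iff, diagonal_sub]
  exact .diagonal (sub_nonneg.2 h)

variable [Fintype n]

lemma smul_one_le_mul_conjTranspose_iff {A : Matrix n n 𝕜} {c : ℝ} :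
    c • 1 ≤ A * Aᴴ ↔ c • 1 ≤ Aᴴ * A := by
  simp only [← Algebra.algebraMap_eq_smul_one,
    algebraMap_le_iff_le_spectrum (isHermitian_mul_conjTranspose_self A).isSelfAdjoint,
    algebraMap_le_iff_le_spectrum (isHermitian_conjTranspose_mul_self A).isSelfAdjoint,
    spectrum_matrix_mul_comm A]

lemma mul_conjTranspose_le_smul_one_iff {A : Matrix n n 𝕜} {c : ℝ} :
    A * Aᴴ ≤ c • 1 ↔ Aᴴ * A ≤ c • 1 := by
  simp only [← Algebra.algebraMap_eq_smul_one,
    le_algebraMap_iff_spectrum_le (isHermitian_mul_conjTranspose_self A).isSelfAdjoint,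
    le_algebraMap_iff_spectrum_le (isHermitian_conjTranspose_mul_self A).isSelfAdjoint,
    spectrum_matrix_mul_comm A]

lemma le_re_trace_smul_one {A : Matrix n n 𝕜} (hA : A.PosSemidef) :
    A ≤ RCLike.re A.trace • (1 : Matrix n n 𝕜) := by
  rw [← Algebra.algebraMap_eq_smul_one, le_algebraMap_iff_spectrum_le hA.1.isSelfAdjoint,
    hA.1.spectrum_real_eq_range_eigenvalues, hA.1.trace_eq_sum_eigenvalues]
  rintro _ ⟨i, rfl⟩
  simpa using Finset.single_le_sum (fun j _ ↦ hA.eigenvalues_nonneg j) (Finset.mem_univ i)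

end Loewner

section Vech

open scoped Kronecker MatrixOrder

variable {d : ℕ}

lemma frob_sq (C : Matrix (Fin d) (Fin d) ℝ) : frob C ^ 2 = (C * Cᵀ).trace := by
  rw [frob, Real.sq_sqrt (by positivity)]
  simp [trace, mul_apply, sq]

lemma mul_transpose_le_frob_sq (C : Matrix (Fin d) (Fin d) ℝ) : C * Cᵀ ≤ frob C ^ 2 • 1 := by
  simpa [frob_sq] using le_re_trace_smul_one (posSemidef_self_mul_conjTranspose C)

lemma kronIC_eq_kronecker (C : Matrix (Fin d) (Fin d) ℝ) :
    kronIC C = C ⊗ₖ (1 : Matrix (Fin d) (Fin d) ℝ) := by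
  ext ⟨i, j⟩ ⟨k, l⟩
  simp [kronIC, kroneckerMap_apply, one_apply]

lemma kronIC_mul (B C : Matrix (Fin d) (Fin d) ℝ) : kronIC (B * C) = kronIC B * kronIC C := by
  simp [kronIC_eq_kronecker, ← mul_kronecker_mul]

lemma elimL_mul_mul_transpose (M : Matrix (Fin d × Fin d) (Fin d × Fin d) ℝ) :
    elimL d * M * (elimL d)ᵀ = M.toBlock (fun p ↦ p.2 ≤ p.1) (fun p ↦ p.2 ≤ p.1) := by
  ext q r
  simp [mul_apply, elimL]

/-- The compression `L (I_d ⊗ C) Lᵀ` of `I_d ⊗ C` to the lower triangular entries: the matrix of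
`vech X ↦ vech (C X)` for lower triangular `X`. -/
def lowerKron (C : Matrix (Fin d) (Fin d) ℝ) : Matrix (LowIdx d) (LowIdx d) ℝ :=
  elimL d * kronIC C * (elimL d)ᵀ

lemma lowerKron_eq_toBlock (C : Matrix (Fin d) (Fin d) ℝ) :
    lowerKron C = (C ⊗ₖ (1 : Matrix (Fin d) (Fin d) ℝ)).toBlock
      (fun p ↦ p.2 ≤ p.1) (fun p ↦ p.2 ≤ p.1) := by
  rw [lowerKron, elimL_mul_mul_transpose, kronIC_eq_kronecker]

lemma lowerKron_transpose (C : Matrix (Fin d) (Fin d) ℝ) :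
    lowerKron Cᵀ = (lowerKron C)ᵀ := by
  ext q r
  simp [lowerKron_eq_toBlock, one_apply, eq_comm]

lemma lowerKron_smul_one (c : ℝ) :
    lowerKron (c • (1 : Matrix (Fin d) (Fin d) ℝ)) = c • 1 := by
  rw [lowerKron_eq_toBlock, smul_kronecker, one_kronecker_one]
  ext q r
  simp [one_apply, Subtype.ext_iff]

lemma lowerKron_sub (B C : Matrix (Fin d) (Fin d) ℝ) :
    lowerKron (B - C) = lowerKron B - lowerKron C := by
  ext q r
  simp [lowerKron_eq_toBlock, sub_mul]

lemma lowerKron_mono {B C : Matrix (Fin d) (Fin d) ℝ} (h : B ≤ C) :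
    lowerKron B ≤ lowerKron C := by
  rw [le_iff, ← lowerKron_sub, lowerKron_eq_toBlock]
  exact ((le_iff.1 h).kronecker .one).submatrix _

lemma kronIC_toBlock_upper_lower {C : Matrix (Fin d) (Fin d) ℝ}
    (hC : C.BlockTriangular OrderDual.toDual) :
    (kronIC C).toBlock (fun p ↦ ¬ p.2 ≤ p.1) (fun p ↦ p.2 ≤ p.1) = 0 := by
  ext ⟨⟨i, j⟩, hij⟩ ⟨⟨k, l⟩, hkl⟩
  simp only [toBlock_apply, kronIC, Matrix.zero_apply, ite_eq_right_iff]
  rintro rfl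
  exact hC ((not_le.1 hij).trans_le hkl)

lemma lowerKron_mul (B : Matrix (Fin d) (Fin d) ℝ) {C : Matrix (Fin d) (Fin d) ℝ}
    (hC : C.BlockTriangular OrderDual.toDual) :
    lowerKron (B * C) = lowerKron B * lowerKron C := by
  simp only [lowerKron, elimL_mul_mul_transpose]
  rw [kronIC_mul, toBlock_mul_eq_add _ (fun p ↦ p.2 ≤ p.1), kronIC_toBlock_upper_lower hC,
    Matrix.mul_zero, add_zero]

lemma smul_one_le_lowerKron_mul_transpose {C : Matrix (Fin d) (Fin d) ℝ}
    (hC : C.BlockTriangular OrderDual.toDual) {c : ℝ} (h : c • 1 ≤ C * Cᵀ) :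
    c • 1 ≤ lowerKron C * (lowerKron C)ᵀ := by
  simp only [← conjTranspose_eq_transpose_of_trivial, smul_one_le_mul_conjTranspose_iff] at h ⊢
  simp only [conjTranspose_eq_transpose_of_trivial] at h ⊢
  rw [← lowerKron_transpose, ← lowerKron_mul _ hC, ← lowerKron_smul_one]
  exact lowerKron_mono h

lemma lowerKron_mul_transpose_le_smul_one {C : Matrix (Fin d) (Fin d) ℝ}
    (hC : C.BlockTriangular OrderDual.toDual) {c : ℝ} (h : C * Cᵀ ≤ c • 1) :
    lowerKron C * (lowerKron C)ᵀ ≤ c • 1 := by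
  simp only [← conjTranspose_eq_transpose_of_trivial, mul_conjTranspose_le_smul_one_iff] at h ⊢
  simp only [conjTranspose_eq_transpose_of_trivial] at h ⊢
  rw [← lowerKron_transpose, ← lowerKron_mul _ hC, ← lowerKron_smul_one]
  exact lowerKron_mono h

lemma elimL_matN_eq_diagonal (d : ℕ) : elimL d * matN d * (elimL d)ᵀ =
    diagonal fun q : LowIdx d ↦ if q.1.1 = q.1.2 then (1 : ℝ) else 2⁻¹ := by
  rw [elimL_mul_mul_transpose]
  ext ⟨⟨i, j⟩, hij : j ≤ i⟩ ⟨⟨k, l⟩, hkl : l ≤ k⟩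
  have hswap : k = j ∧ l = i ↔ (i = k ∧ j = l) ∧ i = j := by grind
  simp only [matN, commK, toBlock_apply, Matrix.smul_apply, Matrix.add_apply, one_apply,
    diagonal_apply, Subtype.mk.injEq, Prod.mk.injEq, smul_eq_mul, hswap]
  grind

lemma elimL_matN_mul_diagonal (d : ℕ) : elimL d * matN d * (elimL d)ᵀ *
    diagonal (fun q : LowIdx d ↦ if q.1.1 = q.1.2 then (1 : ℝ) else 2) = 1 := by
  rw [elimL_matN_eq_diagonal, diagonal_mul_diagonal, ← diagonal_one]
  congr! 2 with q
  split_ifs <;> norm_num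

lemma one_le_elimL_matN_inv (d : ℕ) : 1 ≤ (elimL d * matN d * (elimL d)ᵀ)⁻¹ := by
  rw [inv_eq_right_inv (elimL_matN_mul_diagonal d), ← diagonal_one]
  refine diagonal_le_diagonal fun q ↦ ?_
  split_ifs <;> norm_num

lemma elimL_matN_inv_le_two_smul_one (d : ℕ) :
    (elimL d * matN d * (elimL d)ᵀ)⁻¹ ≤ (2 : ℝ) • 1 := by
  rw [inv_eq_right_inv (elimL_matN_mul_diagonal d), smul_one_eq_diagonal]
  refine diagonal_le_diagonal fun q ↦ ?_
  split_ifs <;> norm_num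

/-- The block `F_C⁻¹` of the inverse Fisher information belonging to the square-root parameter
`vech C`; the factors `L (I_d ⊗ C) Lᵀ` and `L (I_d ⊗ Cᵀ) Lᵀ` are written with `lowerKron`. -/
def factorFIMInv (C : Matrix (Fin d) (Fin d) ℝ) : Matrix (LowIdx d) (LowIdx d) ℝ :=
  (2 : ℝ)⁻¹ • (lowerKron C * (elimL d * matN d * (elimL d)ᵀ)⁻¹ * lowerKron Cᵀ)

lemma half_smul_lowerKron_mul_transpose_le (C : Matrix (Fin d) (Fin d) ℝ) :
    (2 : ℝ)⁻¹ • (lowerKron C * (lowerKron C)ᵀ) ≤ factorFIMInv C := by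
  have h := star_right_conjugate_le_conjugate (one_le_elimL_matN_inv d) (lowerKron C)
  rw [factorFIMInv, lowerKron_transpose]
  exact smul_le_smul_of_nonneg_left (by simpa [star_eq_conjTranspose] using h) (by norm_num)

lemma factorFIMInv_le (C : Matrix (Fin d) (Fin d) ℝ) :
    factorFIMInv C ≤ lowerKron C * (lowerKron C)ᵀ := by
  have h := star_right_conjugate_le_conjugate (elimL_matN_inv_le_two_smul_one d) (lowerKron C)
  rw [factorFIMInv, lowerKron_transpose, inv_smul_le_iff_of_pos two_pos]
  simpa [star_eq_conjTranspose] using h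

theorem inverse_FIM_eigenvalue_bounds_general {C : Matrix (Fin d) (Fin d) ℝ}
    (hC : C.BlockTriangular OrderDual.toDual) {ξ lam : ℝ} (hfrob : frob C ≤ ξ)
    (hlam : lam • 1 ≤ C * Cᵀ) :
    IsUnit (elimL d * matN d * (elimL d)ᵀ) ∧
    (lam / 2) • 1 ≤ fromBlocks (C * Cᵀ) 0 0 (factorFIMInv C) ∧
    fromBlocks (C * Cᵀ) 0 0 (factorFIMInv C) ≤ ξ ^ 2 • 1 := by
  have hC_upper : C * Cᵀ ≤ ξ ^ 2 • 1 :=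
    (mul_transpose_le_frob_sq C).trans <| smul_le_smul_of_nonneg_right
      (pow_le_pow_left₀ (Real.sqrt_nonneg _) hfrob 2) zero_le_one
  refine ⟨.of_mul_eq_one _ (elimL_matN_mul_diagonal d), ?_, ?_⟩
  · calc (lam / 2) • (1 : Matrix (Fin d ⊕ LowIdx d) (Fin d ⊕ LowIdx d) ℝ)
      _ = (2 : ℝ)⁻¹ • fromBlocks (lam • 1) 0 0 (lam • 1) := by
        rw [fromBlocks_diagonal_smul_one, smul_smul, div_eq_inv_mul]
      _ ≤ (2 : ℝ)⁻¹ • fromBlocks (C * Cᵀ) 0 0 (lowerKron C * (lowerKron C)ᵀ) :=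
        smul_le_smul_of_nonneg_left
          (fromBlocks_diagonal_mono hlam (smul_one_le_lowerKron_mul_transpose hC hlam))
          (by norm_num)
      _ ≤ fromBlocks (C * Cᵀ) 0 0 (factorFIMInv C) := by
        have hhalf : (2 : ℝ)⁻¹ • (C * Cᵀ) ≤ C * Cᵀ :=
          smul_le_of_le_one_left (posSemidef_self_mul_conjTranspose C).nonneg (by norm_num)
        simpa only [fromBlocks_smul, smul_zero] using fromBlocks_diagonal_mono hhalf
          (half_smul_lowerKron_mul_transpose_le C)
  · calc fromBlocks (C * Cᵀ) 0 0 (factorFIMInv C)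
      _ ≤ fromBlocks (ξ ^ 2 • 1) 0 0 (ξ ^ 2 • 1) :=
        fromBlocks_diagonal_mono hC_upper
          ((factorFIMInv_le C).trans (lowerKron_mul_transpose_le_smul_one hC hC_upper))
      _ = ξ ^ 2 • 1 := fromBlocks_diagonal_smul_one _

end Vech

/-- eigenvalue bounds for the inverse Fisher information matrix in square-root
parameterization.  If `C` is lower triangular with `ξ_l ≤ ‖C‖_F ≤ ξ_u` and `CCᵀ ≽ λ_min·I`
(`0 < ξ_l ≤ ξ_u`, `0 < λ_min ≤ 1`), then `L N Lᵀ` is invertible and the block-diagonal matrix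
`F⁻¹ = diag(CCᵀ, F_C⁻¹)`, with
`F_C⁻¹ = (1/2)·L(I_d ⊗ C)Lᵀ·(L N Lᵀ)⁻¹·L(I_d ⊗ Cᵀ)Lᵀ`, satisfies
`min{λ_min, λ_min²/2}·I ≼ F⁻¹ ≼ ξ_u²·I`. -/
theorem inverse_FIM_eigenvalue_bounds {d : ℕ} (hd : 1 ≤ d)
    (C : Matrix (Fin d) (Fin d) ℝ)
    (hlow : ∀ i j : Fin d, i < j → C i j = 0)
    (ξl ξu lam : ℝ) (hξl : 0 < ξl) (hξ : ξl ≤ ξu)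
    (hfl : ξl ≤ frob C) (hfu : frob C ≤ ξu)
    (hlam0 : 0 < lam) (hlam1 : lam ≤ 1)
    (hpsd : (C * Cᵀ - lam • (1 : Matrix (Fin d) (Fin d) ℝ)).PosSemidef)
    (FC : Matrix (LowIdx d) (LowIdx d) ℝ)
    (hFC : FC = (2 : ℝ)⁻¹ •
      (elimL d * kronIC C * (elimL d)ᵀ * (elimL d * matN d * (elimL d)ᵀ)⁻¹ *
        (elimL d * kronIC Cᵀ * (elimL d)ᵀ)))
    (Finv : Matrix (Fin d ⊕ LowIdx d) (Fin d ⊕ LowIdx d) ℝ)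
    (hFinv : Finv = Matrix.fromBlocks (C * Cᵀ) 0 0 FC) :
    IsUnit (elimL d * matN d * (elimL d)ᵀ) ∧
    (Finv - min lam (lam ^ 2 / 2) •
      (1 : Matrix (Fin d ⊕ LowIdx d) (Fin d ⊕ LowIdx d) ℝ)).PosSemidef ∧
    (ξu ^ 2 • (1 : Matrix (Fin d ⊕ LowIdx d) (Fin d ⊕ LowIdx d) ℝ) - Finv).PosSemidef := by
  subst hFC hFinv
  obtain ⟨hunit, hlower, hupper⟩ := inverse_FIM_eigenvalue_bounds_general hlow hfu hpsd
  have hmin : min lam (lam ^ 2 / 2) ≤ lam / 2 := (min_le_right _ _).trans (by nlinarith)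
  open scoped MatrixOrder in
  exact ⟨hunit, (smul_le_smul_of_nonneg_right hmin zero_le_one).trans hlower, hupper⟩

end
end

section
/- For any real d×d matrices C and K, the Frobenius norm bound ‖C · tril[Cᵀ K]‖_F ≤ √(5/2) · ‖C‖_F² · ‖K‖_F holds. -/
open Matrix

noncomputable section

/-- `tril A` takes the strictly lower-triangular part of `A` and halves its diagonal. -/
def tril {d : ℕ} (A : Matrix (Fin d) (Fin d) ℝ) : Matrix (Fin d) (Fin d) ℝ :=
  fun i j => if (j : ℕ) < (i : ℕ) then A i j else if (i : ℕ) = (j : ℕ) then A i j / 2 else 0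

open scoped Matrix.Norms.Frobenius

lemma frobenius_norm_le_of_norm_apply_le {m n α β : Type*} [Fintype m] [Fintype n]
    [SeminormedAddCommGroup α] [SeminormedAddCommGroup β] {A : Matrix m n α} {B : Matrix m n β}
    (h : ∀ i j, ‖A i j‖ ≤ ‖B i j‖) : ‖A‖ ≤ ‖B‖ := by
  rw [frobenius_norm_def, frobenius_norm_def]
  gcongr with i _ j _
  exact h i j

lemma frob_eq_norm {d : ℕ} (A : Matrix (Fin d) (Fin d) ℝ) : frob A = ‖A‖ := by
  simp only [frob, frobenius_norm_def, Real.sqrt_eq_rpow, Real.rpow_two, Real.norm_eq_abs, sq_abs]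

lemma norm_tril_apply_le {d : ℕ} (A : Matrix (Fin d) (Fin d) ℝ) (i j : Fin d) :
    ‖tril A i j‖ ≤ ‖A i j‖ := by
  unfold tril
  split_ifs
  · exact le_rfl
  · rw [norm_div, Real.norm_two]
    exact half_le_self (norm_nonneg _)
  · simp only [norm_zero, norm_nonneg]

lemma frobenius_norm_tril_le {d : ℕ} (A : Matrix (Fin d) (Fin d) ℝ) : ‖tril A‖ ≤ ‖A‖ :=
  frobenius_norm_le_of_norm_apply_le (norm_tril_apply_le A)

theorem frobenius_mul_tril_le_general {m : Type*} [Fintype m] {d : ℕ}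
    (C K : Matrix m (Fin d) ℝ) :
    ‖C * tril (Cᵀ * K)‖ ≤ ‖C‖ ^ 2 * ‖K‖ :=
  calc
    ‖C * tril (Cᵀ * K)‖ ≤ ‖C‖ * ‖tril (Cᵀ * K)‖ := frobenius_norm_mul _ _
    _ ≤ ‖C‖ * ‖Cᵀ * K‖ := by gcongr; exact frobenius_norm_tril_le _
    _ ≤ ‖C‖ * (‖Cᵀ‖ * ‖K‖) := by gcongr; exact frobenius_norm_mul _ _
    _ = ‖C‖ ^ 2 * ‖K‖ := by rw [frobenius_norm_transpose, sq, mul_assoc]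

/-- for any real `d×d` matrices `C` and `K`,
`‖C · tril[Cᵀ K]‖_F ≤ √(5/2) · ‖C‖_F² · ‖K‖_F`. -/
theorem frobenius_mul_tril_le {d : ℕ} (C K : Matrix (Fin d) (Fin d) ℝ) :
    frob (C * tril (Cᵀ * K)) ≤ Real.sqrt (5 / 2) * (frob C) ^ 2 * frob K := by
  simp only [frob_eq_norm, mul_assoc]
  exact (frobenius_mul_tril_le_general C K).trans
    (le_mul_of_one_le_left (by positivity) (Real.one_le_sqrt.mpr (by norm_num)))

end
end

section
/- Let C ∈ ℝ^{d×d}, let H ∈ ℝ^{d×d} be symmetric, let α ∈ ℝ, and set W = Cᵀ H C. Then the square-root variational Newton covariance update satisfies the exact identity (C − α·C·tril[W − I])·(C − α·C·tril[W − I])ᵀ = C·( I + α(I − W) + (α²/4)·(I − 2W + 4·tril[W]·tril[W]ᵀ) )·Cᵀ; in particular the updated covariance equals C((1+α)I − αW)Cᵀ up to a term of order α². -/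
open Matrix

noncomputable section

/-!
Halving the diagonal makes `tril` split a symmetric matrix as `W = L + Lᵀ` with `L = tril W`, while
`tril 1 = (1 / 2) • 1`. The updated square root is therefore `C * (1 - α • (L - (1 / 2) • 1))`. In
the expansion of its Gram product `L` and `Lᵀ` occur linearly only through the sum `L + Lᵀ = W`, and
the only other nonconstant term is `L * Lᵀ`.
-/

section Tril

variable {d : ℕ}

theorem tril_sub (A B : Matrix (Fin d) (Fin d) ℝ) : tril (A - B) = tril A - tril B := by
  ext i j
  simp only [tril, Matrix.sub_apply]
  split_ifs <;> ring

theorem tril_diagonal (v : Fin d → ℝ) : tril (diagonal v) = (1 / 2 : ℝ) • diagonal v := by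
  ext i j
  rcases eq_or_ne i j with rfl | hij
  · simp [tril, div_eq_inv_mul]
  · simp [tril, hij, Fin.val_ne_of_ne hij]

theorem tril_one : tril (1 : Matrix (Fin d) (Fin d) ℝ) = (1 / 2 : ℝ) • 1 :=
  tril_diagonal 1

theorem tril_add_transpose_tril_transpose (A : Matrix (Fin d) (Fin d) ℝ) :
    tril A + (tril Aᵀ)ᵀ = A := by
  ext i j
  rcases lt_trichotomy i j with hij | rfl | hji
  · simp [tril, hij, Fin.val_ne_of_ne hij.ne, hij.not_gt]
  · simp [tril]
  · simp [tril, hji, Fin.val_ne_of_ne hji.ne, hji.not_gt]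

theorem tril_add_transpose_tril_of_isSymm {A : Matrix (Fin d) (Fin d) ℝ} (hA : A.IsSymm) :
    tril A + (tril A)ᵀ = A := by
  simpa only [hA.eq] using tril_add_transpose_tril_transpose A

end Tril

theorem one_sub_smul_sub_half_mul {K R : Type*} [Field K] [NeZero (2 : K)]
    [Ring R] [Algebra K R] (a : K) (x y : R) :
    (1 - a • (x - (1 / 2 : K) • 1)) * (1 - a • (y - (1 / 2 : K) • 1)) =
      1 + a • (1 - (x + y)) + (a ^ 2 / 4) • (1 - (2 : K) • (x + y) + (4 : K) • (x * y)) := by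
  have two_ne : (2 : K) ≠ 0 := two_ne_zero
  have four_ne : (4 : K) ≠ 0 := by
    simpa only [← two_mul, ← two_add_two_eq_four] using mul_ne_zero two_ne two_ne
  simp only [mul_sub, sub_mul, mul_one, one_mul, smul_mul_assoc, mul_smul_comm]
  match_scalars <;> field_simp <;> ring

section Transpose

variable {l m n R : Type*} [Fintype m] [Fintype n] [NonUnitalCommSemiring R]

theorem mul_mul_transpose_mul (C : Matrix l m R) (X : Matrix m n R) :
    (C * X) * (C * X)ᵀ = C * (X * Xᵀ) * Cᵀ := by
  simp only [transpose_mul, Matrix.mul_assoc]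

theorem isSymm_transpose_mul_mul (C : Matrix m l R) {H : Matrix m m R} (hH : H.IsSymm) :
    (Cᵀ * H * C).IsSymm := by
  simp only [IsSymm, transpose_mul, transpose_transpose, hH.eq, Matrix.mul_assoc]

end Transpose

theorem srvn_covariance_update_identity_general {m : Type*} {d : ℕ}
    (C : Matrix m (Fin d) ℝ) {W : Matrix (Fin d) (Fin d) ℝ} (hW : W.IsSymm) (α : ℝ) :
    (C - α • (C * tril (W - 1))) * (C - α • (C * tril (W - 1)))ᵀ =
      C * (1 + α • ((1 : Matrix (Fin d) (Fin d) ℝ) - W) +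
        (α ^ 2 / 4) • ((1 : Matrix (Fin d) (Fin d) ℝ) - (2 : ℝ) • W +
          (4 : ℝ) • (tril W * (tril W)ᵀ))) * Cᵀ := by
  have factor : C - α • (C * tril (W - 1)) =
      C * (1 - α • (tril W - (1 / 2 : ℝ) • 1)) := by
    rw [tril_sub, tril_one, Matrix.mul_sub C 1, Matrix.mul_one, Matrix.mul_smul]
  have gram := one_sub_smul_sub_half_mul α (tril W) (tril W)ᵀ
  rw [tril_add_transpose_tril_of_isSymm hW] at gram
  rw [factor, mul_mul_transpose_mul, ← gram]
  simp only [transpose_sub, transpose_smul, transpose_one]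

/-- exact identity for the square-root variational Newton covariance update:
with `W = Cᵀ H C` (`H` symmetric),
`(C − α·C·tril[W − I])·(C − α·C·tril[W − I])ᵀ
  = C·(I + α(I − W) + (α²/4)·(I − 2W + 4·tril[W]·tril[W]ᵀ))·Cᵀ`. -/
theorem srvn_covariance_update_identity {d : ℕ}
    (C H : Matrix (Fin d) (Fin d) ℝ) (hH : Hᵀ = H) (α : ℝ)
    (W : Matrix (Fin d) (Fin d) ℝ) (hW : W = Cᵀ * H * C) :
    (C - α • (C * tril (W - 1))) * (C - α • (C * tril (W - 1)))ᵀ =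
      C * (1 + α • ((1 : Matrix (Fin d) (Fin d) ℝ) - W) +
        (α ^ 2 / 4) • ((1 : Matrix (Fin d) (Fin d) ℝ) - (2 : ℝ) • W +
          (4 : ℝ) • (tril W * (tril W)ᵀ))) * Cᵀ := by
  have W_symm : W.IsSymm := hW ▸ isSymm_transpose_mul_mul C hH
  exact srvn_covariance_update_identity_general C W_symm α

end
end

section
/- Let C ∈ ℝ^{d×d} be lower triangular with CCᵀ ≽ λ_min·I for some λ_min > 0. Then for every lower-triangular X ∈ ℝ^{d×d}, the quadratic form of the natural-gradient preconditioner is coercive: tr(Xᵀ · C · tril[Cᵀ X]) ≥ (λ_min/2)·‖X‖_F². -/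
open Matrix

noncomputable section

/-!
For square `A` the matrices `A * Aᴴ` and `Aᴴ * A` have the same characteristic polynomial, so a
lower bound `r • 1` on one is a lower bound on the other. If `A` is lower triangular with trailing
block `B`, then `Bᴴ * B` is a principal submatrix of `Aᴴ * A`, so the bound passes from `A * Aᴴ` to
`B * Bᴴ` by way of `Aᴴ * A` and `Bᴴ * B`; `B * Bᴴ` itself is not a submatrix of `A * Aᴴ`.

The `j`-th column `y` of a lower-triangular `X` is supported on the indices `i ≥ j`, so the entries
`(Cᵀ y) i` with `i ≥ j`, which are the ones `tril` keeps, are those of `Bᵀ` applied to `y`, for `B`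
the trailing block of `C`. Halving the diagonal costs at most the factor `1 / 2`.
-/

section Block

variable {m n R : Type*} {p : m → Prop} {q : n → Prop}

theorem toBlock_conjTranspose_mul_self [Fintype m] [DecidablePred p] [CommRing R] [StarRing R]
    {A : Matrix m n R} (hA : A.toBlock (fun i => ¬p i) q = 0) :
    (Aᴴ * A).toBlock q q = (A.toBlock p q)ᴴ * A.toBlock p q := by
  rw [toBlock_mul_eq_add q p, hA, Matrix.mul_zero, add_zero]
  rfl

theorem toBlock_mulVec_of_support [Fintype n] [DecidablePred q] [NonUnitalNonAssocSemiring R]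
    (A : Matrix m n R) {y : n → R} (hy : ∀ k, ¬q k → y k = 0) (i : {i // p i}) :
    (A.toBlock p q *ᵥ fun k => y k) i = (A *ᵥ y) i := by
  have hsupp : ∑ k with q k, A i k * y k = ∑ k, A i k * y k :=
    Finset.sum_filter_of_ne fun k _ hk => by
      contrapose! hk
      rw [hy k hk, mul_zero]
  simp only [mulVec, dotProduct, toBlock_apply]
  rw [← hsupp, Finset.sum_subtype _ (p := q) (by simp)]

end Block

section RCLike

open scoped ComplexOrder

variable {m n 𝕜 : Type*} [RCLike 𝕜]

theorem posSemidef_iff_of_charpoly_eq [Fintype n] [DecidableEq n] {A B : Matrix n n 𝕜}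
    (hA : A.IsHermitian) (hB : B.IsHermitian) (h : A.charpoly = B.charpoly) :
    A.PosSemidef ↔ B.PosSemidef := by
  rw [hA.posSemidef_iff_eigenvalues_nonneg, hB.posSemidef_iff_eigenvalues_nonneg,
    (hA.eigenvalues_eq_eigenvalues_iff hB).2 h]

theorem posSemidef_self_mul_conjTranspose_sub_smul_one_iff [Fintype n] [DecidableEq n]
    (A : Matrix n n 𝕜) (r : ℝ) :
    (A * Aᴴ - r • (1 : Matrix n n 𝕜)).PosSemidef ↔
      (Aᴴ * A - r • (1 : Matrix n n 𝕜)).PosSemidef := by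
  have hr : (r • (1 : Matrix n n 𝕜)).IsHermitian := isHermitian_one.smul (.all r)
  have hscalar : r • (1 : Matrix n n 𝕜) = scalar n (r : 𝕜) := by
    ext i j
    simp [one_apply, diagonal_apply, RCLike.real_smul_eq_coe_mul]
  refine posSemidef_iff_of_charpoly_eq ((isHermitian_mul_conjTranspose_self A).sub hr)
    ((isHermitian_conjTranspose_mul_self A).sub hr) ?_
  rw [hscalar, charpoly_sub_scalar, charpoly_sub_scalar, charpoly_mul_comm]

theorem re_star_dotProduct_self [Fintype n] (v : n → 𝕜) :
    RCLike.re (star v ⬝ᵥ v) = ∑ i, ‖v i‖ ^ 2 := by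
  simp only [dotProduct, Pi.star_apply, RCLike.star_def, RCLike.conj_mul, map_sum,
    ← RCLike.ofReal_pow, RCLike.ofReal_re]

theorem mul_sum_norm_sq_le_of_posSemidef [Fintype m] [DecidableEq m] [Fintype n]
    {A : Matrix m n 𝕜} {r : ℝ} (h : (A * Aᴴ - r • (1 : Matrix m m 𝕜)).PosSemidef) (y : m → 𝕜) :
    r * ∑ i, ‖y i‖ ^ 2 ≤ ∑ j, ‖(Aᴴ *ᵥ y) j‖ ^ 2 := by
  have hgram : star y ⬝ᵥ (A * Aᴴ) *ᵥ y = star (Aᴴ *ᵥ y) ⬝ᵥ (Aᴴ *ᵥ y) := by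
    rw [← mulVec_mulVec, dotProduct_mulVec, star_mulVec, conjTranspose_conjTranspose]
  have hform := h.re_dotProduct_nonneg y
  rw [sub_mulVec, smul_mulVec, one_mulVec, dotProduct_sub, dotProduct_smul, hgram, map_sub,
    RCLike.smul_re, re_star_dotProduct_self, re_star_dotProduct_self] at hform
  exact sub_nonneg.1 hform

variable [Fintype n] {A : Matrix n n 𝕜} {p : n → Prop} [DecidablePred p]

theorem posSemidef_toBlock_mul_conjTranspose_sub_smul_one [DecidableEq n] {r : ℝ}
    (hA : A.toBlock (fun i => ¬p i) p = 0)
    (h : (A * Aᴴ - r • (1 : Matrix n n 𝕜)).PosSemidef) :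
    (A.toBlock p p * (A.toBlock p p)ᴴ - r • (1 : Matrix {i // p i} {i // p i} 𝕜)).PosSemidef := by
  rw [posSemidef_self_mul_conjTranspose_sub_smul_one_iff] at h ⊢
  rw [← toBlock_conjTranspose_mul_self hA, ← toBlock_one_self p]
  exact h.submatrix Subtype.val

theorem mul_sum_norm_sq_le_sum_filter_of_posSemidef [DecidableEq n] {r : ℝ}
    (hA : A.toBlock (fun i => ¬p i) p = 0)
    (h : (A * Aᴴ - r • (1 : Matrix n n 𝕜)).PosSemidef) {y : n → 𝕜} (hy : ∀ i, ¬p i → y i = 0) :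
    r * ∑ i, ‖y i‖ ^ 2 ≤ ∑ i with p i, ‖(Aᴴ *ᵥ y) i‖ ^ 2 := by
  have hblock := mul_sum_norm_sq_le_of_posSemidef
    (posSemidef_toBlock_mul_conjTranspose_sub_smul_one hA h) fun k => y k
  have hsupp : ∑ i with p i, ‖y i‖ ^ 2 = ∑ i, ‖y i‖ ^ 2 :=
    Finset.sum_filter_of_ne fun i _ hi => by
      contrapose! hi
      rw [hy i hi, norm_zero, zero_pow two_ne_zero]
  have hmulVec (i : {i // p i}) :
      ((A.toBlock p p)ᴴ *ᵥ fun k => y k) i = (Aᴴ *ᵥ y) i :=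
    toBlock_mulVec_of_support Aᴴ hy i
  simp only [hmulVec] at hblock
  rwa [← hsupp, Finset.sum_subtype _ (p := p) (by simp), Finset.sum_subtype _ (p := p) (by simp)]

end RCLike

section LowerTriangular

variable {d : ℕ}

theorem frob_sq_s15 (A : Matrix (Fin d) (Fin d) ℝ) : frob A ^ 2 = ∑ j, ∑ i, A i j ^ 2 := by
  rw [frob, Real.sq_sqrt (by positivity), Finset.sum_comm]

theorem half_sq_le_mul_tril {A : Matrix (Fin d) (Fin d) ℝ} {i j : Fin d} (hij : j ≤ i) :
    A i j ^ 2 / 2 ≤ A i j * tril A i j := by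
  rcases hij.lt_or_eq with hlt | rfl
  · have := sq_nonneg (A i j)
    simp only [tril, Fin.val_fin_lt, if_pos hlt]
    linarith
  · simp only [tril, lt_irrefl, if_false, if_true]
    exact le_of_eq (by ring)

theorem tril_eq_zero {A : Matrix (Fin d) (Fin d) ℝ} {i j : Fin d} (hij : i < j) :
    tril A i j = 0 := by
  simp [tril, hij.not_gt, hij.ne, Fin.val_inj]

theorem half_sum_sq_le_trace_transpose_mul_tril (A : Matrix (Fin d) (Fin d) ℝ) :
    (∑ j, ∑ i with j ≤ i, A i j ^ 2) / 2 ≤ (Aᵀ * tril A).trace := by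
  simp only [Finset.sum_filter, Finset.sum_div, trace, diag, mul_apply, transpose_apply]
  refine Finset.sum_le_sum fun j _ => Finset.sum_le_sum fun i _ => ?_
  split_ifs with hij
  · exact half_sq_le_mul_tril hij
  · simp [tril_eq_zero (not_le.1 hij)]

theorem mul_frob_sq_le_sum_sq_transpose_mul {C X : Matrix (Fin d) (Fin d) ℝ} {r : ℝ}
    (hC : ∀ i j : Fin d, i < j → C i j = 0)
    (h : (C * Cᵀ - r • (1 : Matrix (Fin d) (Fin d) ℝ)).PosSemidef)
    (hX : ∀ i j : Fin d, i < j → X i j = 0) :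
    r * frob X ^ 2 ≤ ∑ j, ∑ i with j ≤ i, (Cᵀ * X) i j ^ 2 := by
  rw [frob_sq_s15, Finset.mul_sum]
  refine Finset.sum_le_sum fun j _ => ?_
  have hblock : C.toBlock (fun i => ¬j ≤ i) (j ≤ ·) = 0 := by
    ext i k
    exact hC i k ((not_le.1 i.2).trans_le k.2)
  have hcol (i : Fin d) : (Cᵀ * X) i j = (Cᵀ *ᵥ X.col j) i := rfl
  rw [← conjTranspose_eq_transpose_of_trivial] at h
  simpa [hcol] using
    mul_sum_norm_sq_le_sum_filter_of_posSemidef hblock h (y := X.col j)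
      fun i hi => hX i j (not_le.1 hi)

end LowerTriangular

/-- if `C` is lower triangular with `CCᵀ ≽ λ_min·I` (`λ_min > 0`), then for every
lower-triangular `X`, `tr(Xᵀ · C · tril[Cᵀ X]) ≥ (λ_min/2)·‖X‖_F²`. -/
theorem natural_gradient_preconditioner_coercive {d : ℕ}
    (C : Matrix (Fin d) (Fin d) ℝ) (hlow : ∀ i j : Fin d, i < j → C i j = 0)
    (lam : ℝ) (hlam : 0 < lam)
    (hpsd : (C * Cᵀ - lam • (1 : Matrix (Fin d) (Fin d) ℝ)).PosSemidef) :
    ∀ X : Matrix (Fin d) (Fin d) ℝ, (∀ i j : Fin d, i < j → X i j = 0) →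
      lam / 2 * (frob X) ^ 2 ≤ (Xᵀ * (C * tril (Cᵀ * X))).trace := by
  intro X hX
  have hsum := mul_frob_sq_le_sum_sq_transpose_mul hlow hpsd hX
  have htril := half_sum_sq_le_trace_transpose_mul_tril (Cᵀ * X)
  rw [transpose_mul, transpose_transpose, Matrix.mul_assoc] at htril
  linarith

end
end
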